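/- There exist absolute constants c, C > 0 with the following property. Let A ∈ ℝ^{d×d} be positive semidefinite, let δ ∈ (0, 1/2], and let k, ℓ be integers with k ≥ 1 and ℓ ≥ c·log(1/δ). Let Ã, Δ ∈ ℝ^{d×d} be any matrices such that tr(A) = tr(Ã) + tr(Δ) and such that ‖Δ‖_F ≤ 2‖A − B‖_F for every matrix B ∈ ℝ^{d×d} with rank(B) ≤ k. Then, with probability at least 1 − δ over the random matrix G defining H_ℓ(Δ), the estimator Z = tr(Ã) + H_ℓ(Δ) satisfies |Z − tr(A)| ≤ 2C·√(log(1/δ)/(kℓ))·tr(A). -/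

import Mathlib

open MeasureTheory Matrix

/-- The Frobenius norm of a real matrix. -/
noncomputable def frobNorm {m n : ℕ} (M : Matrix (Fin m) (Fin n) ℝ) : ℝ :=
  Real.sqrt (∑ i, ∑ j, (M i j) ^ 2)

/-- The Rademacher distribution on `ℝ`: uniform on `{-1, +1}`. -/
noncomputable def rademacher : Measure ℝ :=
  ((1 : ENNReal) / 2) • Measure.dirac (-1) + ((1 : ENNReal) / 2) • Measure.dirac 1

instance : IsProbabilityMeasure rademacher := by
  constructor
  simp [rademacher]
  exact ENNReal.inv_two_add_inv_two

/-- The law of a `d × n` random matrix with i.i.d. Rademacher entries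
(as a product measure on `Fin d → Fin n → ℝ`). -/
noncomputable def radMeasure (d n : ℕ) : Measure (Fin d → Fin n → ℝ) :=
  Measure.pi fun _ => Measure.pi fun _ => rademacher

/-- Hutchinson's estimator with `n` queries, evaluated at the query matrix `g`. -/
noncomputable def hutch {d n : ℕ} (A : Matrix (Fin d) (Fin d) ℝ)
    (g : Fin d → Fin n → ℝ) : ℝ :=
  (1 / (n : ℝ)) * ((Matrix.of g)ᵀ * A * Matrix.of g).trace

/-!
A positive semidefinite `A` has at most `k` eigenvalues above `tr A / k`, so discarding the others
leaves a matrix of rank at most `k` at Frobenius distance at most `tr A / √k` from `A`. Hence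
`‖Δ‖_F ≤ 2 tr A / √k`, and it remains to bound the deviation of `H_ℓ(Δ)` from `tr Δ` by a multiple
of `√(log (1/δ) / ℓ) ‖Δ‖_F`.

This is a Chernoff bound. The exponential moment of `tr (Gᵀ M G)` is at most
`exp (ℓ (tr M + 2 ‖M‖_F²))` when `‖M‖_F ≤ 1/4`: integrate out the rows of `G` one at a time. Since
`cosh v ≤ exp (v² / 2)`, each step costs a factor `exp (ℓ M₀₀)` and replaces `M` by the block
without the first row and column plus a rank-one matrix `p pᵀ / 2`, which increases neither `‖M‖_F`
nor, once `M₀₀` is added back, `tr M + 2 ‖M‖_F²`.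
-/

open ProbabilityTheory Real
open scoped Matrix.Norms.Frobenius

section Frobenius

variable {m n 𝕜 : Type*} [Fintype m] [Fintype n] [RCLike 𝕜]

theorem frobenius_norm_sq_eq_sum (M : Matrix m n 𝕜) : ‖M‖ ^ 2 = ∑ i, ∑ j, ‖M i j‖ ^ 2 := by
  have h_nonneg : 0 ≤ ∑ i, ∑ j, ‖M i j‖ ^ 2 := by positivity
  simp only [frobenius_norm_def, rpow_two, ← sqrt_eq_rpow, sq_sqrt h_nonneg]

theorem frobenius_norm_sq_eq_re_trace (M : Matrix m n 𝕜) :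
    ‖M‖ ^ 2 = RCLike.re (Mᴴ * M).trace := by
  rw [frobenius_norm_sq_eq_sum, Finset.sum_comm]
  simp only [trace, diag_apply, mul_apply, conjTranspose_apply, RCLike.star_def, RCLike.conj_mul,
    map_sum, ← RCLike.ofReal_pow, RCLike.ofReal_re]

theorem frobenius_norm_conjStarAlgAut [DecidableEq n] (U : unitaryGroup n 𝕜) (M : Matrix n n 𝕜) :
    ‖Unitary.conjStarAlgAut 𝕜 _ U M‖ = ‖M‖ := by
  rw [← sq_eq_sq₀ (norm_nonneg _) (norm_nonneg _), frobenius_norm_sq_eq_re_trace,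
    frobenius_norm_sq_eq_re_trace, ← star_eq_conjTranspose, ← star_eq_conjTranspose, ← map_star,
    ← map_mul, Unitary.conjStarAlgAut_apply, trace_mul_cycle, Unitary.coe_star_mul_self, one_mul]

theorem frobenius_norm_vecMulVec (v : m → 𝕜) (w : n → 𝕜) :
    ‖vecMulVec v w‖ = ‖WithLp.toLp 2 v‖ * ‖WithLp.toLp 2 w‖ := by
  rw [← sq_eq_sq₀ (norm_nonneg _) (by positivity), mul_pow, frobenius_norm_sq_eq_sum,
    EuclideanSpace.norm_sq_eq, EuclideanSpace.norm_sq_eq, Finset.sum_mul_sum]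
  simp only [vecMulVec_apply, norm_mul, mul_pow]

theorem frobNorm_eq_norm {m n : ℕ} (M : Matrix (Fin m) (Fin n) ℝ) : frobNorm M = ‖M‖ := by
  rw [← sqrt_sq (norm_nonneg M), frobenius_norm_sq_eq_sum]
  simp only [frobNorm, norm_eq_abs, sq_abs]

end Frobenius

section LowRank

variable {ι 𝕜 : Type*} [Fintype ι] [RCLike 𝕜]

theorem card_filter_sum_div_lt_le {a : ι → ℝ} (ha : ∀ i, 0 ≤ a i) {k : ℕ} (hk : 0 < k) :
    (Finset.univ.filter fun i => (∑ j, a j) / k < a i).card ≤ k := by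
  set W := Finset.univ.filter fun i => (∑ j, a j) / k < a i
  by_contra! hcard
  have hk' : (0 : ℝ) < k := by exact_mod_cast hk
  have h_nonneg : 0 ≤ (∑ j, a j) / k := div_nonneg (Finset.sum_nonneg fun j _ => ha j) hk'.le
  have h_lt : ∑ _i ∈ W, (∑ j, a j) / k < ∑ i ∈ W, a i :=
    Finset.sum_lt_sum_of_nonempty (Finset.card_pos.mp (by omega))
      fun i hi => (Finset.mem_filter.mp hi).2
  have h_le : ∑ j, a j ≤ W.card * ((∑ j, a j) / k) := calc
    ∑ j, a j = k * ((∑ j, a j) / k) := by field_simp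
    _ ≤ W.card * ((∑ j, a j) / k) := by gcongr
  rw [Finset.sum_const, nsmul_eq_mul] at h_lt
  linarith [Finset.sum_le_univ_sum_of_nonneg (s := W) ha]

theorem exists_sparse_sum_sq_sub_le {a : ι → ℝ} (ha : ∀ i, 0 ≤ a i) {k : ℕ} (hk : 0 < k) :
    ∃ b : ι → ℝ, Fintype.card {i // b i ≠ 0} ≤ k ∧ ∑ i, (a i - b i) ^ 2 ≤ (∑ i, a i) ^ 2 / k := by
  set τ := (∑ j, a j) / k with hτ
  have hτ_nonneg : 0 ≤ τ := div_nonneg (Finset.sum_nonneg fun j _ => ha j) k.cast_nonneg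
  refine ⟨fun i => if τ < a i then a i else 0, ?_, ?_⟩
  · rw [Fintype.card_subtype]
    refine (Finset.card_le_card fun i hi => ?_).trans (card_filter_sum_div_lt_le ha hk)
    simp only [Finset.mem_filter, Finset.mem_univ, true_and] at hi ⊢
    exact (ite_ne_right_iff.mp hi).1
  · calc ∑ i, (a i - if τ < a i then a i else 0) ^ 2 ≤ ∑ i, τ * a i := by
          refine Finset.sum_le_sum fun i _ => ?_
          split_ifs with h
          · simpa using mul_nonneg hτ_nonneg (ha i)
          · simpa [sq] using mul_le_mul_of_nonneg_right (not_lt.mp h) (ha i)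
      _ = (∑ i, a i) ^ 2 / k := by rw [← Finset.mul_sum, hτ]; ring

open scoped ComplexOrder in
theorem exists_rank_le_norm_sub_le {A : Matrix ι ι 𝕜} (hA : A.PosSemidef) {k : ℕ} (hk : 0 < k) :
    ∃ B : Matrix ι ι 𝕜, B.rank ≤ k ∧ ‖A - B‖ ≤ RCLike.re A.trace / √k := by
  classical
  have hH := hA.isHermitian
  have h_trace : RCLike.re A.trace = ∑ i, hH.eigenvalues i := by
    simp [hH.trace_eq_sum_eigenvalues]
  have h_trace_nonneg : 0 ≤ RCLike.re A.trace :=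
    h_trace ▸ Finset.sum_nonneg fun i _ => hA.eigenvalues_nonneg i
  obtain ⟨b, hb_card, hb_err⟩ := exists_sparse_sum_sq_sub_le hA.eigenvalues_nonneg hk
  set U := Unitary.conjStarAlgAut 𝕜 _ hH.eigenvectorUnitary with hU
  refine ⟨U (diagonal (RCLike.ofReal ∘ b)), ?_, ?_⟩
  · rw [hU, Unitary.conjStarAlgAut_apply]
    refine ((rank_mul_le_left _ _).trans (rank_mul_le_right _ _)).trans ?_
    simpa [rank_diagonal] using hb_card
  · refine (sq_le_sq₀ (norm_nonneg _) (by positivity)).mp ?_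
    calc ‖A - U (diagonal (RCLike.ofReal ∘ b))‖ ^ 2
        = ∑ i, (hH.eigenvalues i - b i) ^ 2 := by
          nth_rewrite 1 [hH.spectral_theorem]
          rw [← map_sub, frobenius_norm_conjStarAlgAut, diagonal_sub, frobenius_norm_diagonal,
            EuclideanSpace.norm_sq_eq]
          simp only [Function.comp_apply, ← RCLike.ofReal_sub, RCLike.norm_ofReal, sq_abs]
      _ ≤ (∑ i, hH.eigenvalues i) ^ 2 / k := hb_err
      _ = (RCLike.re A.trace / √k) ^ 2 := by
          rw [h_trace, div_pow, sq_sqrt k.cast_nonneg]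

end LowRank

section Rademacher

theorem integral_rademacher (f : ℝ → ℝ) : ∫ x, f x ∂rademacher = (f (-1) + f 1) / 2 := by
  rw [rademacher, integral_add_measure
    ((integrable_dirac (by simp)).smul_measure (by simp))
    ((integrable_dirac (by simp)).smul_measure (by simp))]
  simp only [integral_smul_measure, integral_dirac, one_div, ENNReal.toReal_inv,
    ENNReal.toReal_ofNat, smul_eq_mul]
  ring

theorem integral_exp_quadratic_rademacher_le (a v : ℝ) :
    ∫ x, exp (a * x ^ 2 + v * x) ∂rademacher ≤ exp (a + v ^ 2 / 2) := by
  calc ∫ x, exp (a * x ^ 2 + v * x) ∂rademacher = exp a * cosh v := by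
        rw [integral_rademacher, cosh_eq]
        simp only [exp_add, mul_neg, neg_sq, one_pow, mul_one]
        ring
    _ ≤ exp (a + v ^ 2 / 2) := by
        rw [exp_add]
        gcongr
        exact cosh_le_exp_half_sq v

theorem integral_exp_sum_quadratic_rademacher_le {ι : Type*} [Fintype ι] (a : ℝ) (v : ι → ℝ) :
    ∫ x, exp (∑ c, (a * x c ^ 2 + v c * x c)) ∂(Measure.pi fun _ : ι => rademacher) ≤
      exp (∑ c, (a + v c ^ 2 / 2)) := by
  simp only [exp_sum]
  rw [integral_fintype_prod_eq_prod fun c x => exp (a * x ^ 2 + v c * x)]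
  exact Finset.prod_le_prod (fun c _ => integral_nonneg fun x => (exp_pos _).le)
    fun c _ => integral_exp_quadratic_rademacher_le a (v c)

theorem ae_rademacher_mem_Icc : ∀ᵐ x ∂rademacher, x ∈ Set.Icc (-1 : ℝ) 1 := by
  rw [rademacher, ae_add_measure_iff]
  constructor <;> refine Measure.ae_smul_measure ?_ _ <;> simp [ae_dirac_eq]

instance (d n : ℕ) : IsProbabilityMeasure (radMeasure d n) := by
  unfold radMeasure; infer_instance

theorem ae_radMeasure_mem_Icc (d n : ℕ) :
    ∀ᵐ g ∂radMeasure d n, g ∈ Set.Icc (-1 : Fin d → Fin n → ℝ) 1 := by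
  have h_row : ∀ᵐ x ∂(Measure.pi fun _ : Fin n => rademacher), x ∈ Set.Icc (-1 : Fin n → ℝ) 1 := by
    have h := ae_all_iff.mpr fun c : Fin n =>
      (Measure.tendsto_eval_ae_ae (μ := fun _ => rademacher) (i := c)).eventually
        ae_rademacher_mem_Icc
    exact h.mono fun x hx => ⟨fun c => (hx c).1, fun c => (hx c).2⟩
  have h := ae_all_iff.mpr fun i : Fin d =>
    (Measure.tendsto_eval_ae_ae
      (μ := fun _ => Measure.pi fun _ : Fin n => rademacher) (i := i)).eventually h_row
  exact h.mono fun g hg => ⟨fun i => (hg i).1, fun i => (hg i).2⟩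

theorem integrable_radMeasure {d n : ℕ} {f : (Fin d → Fin n → ℝ) → ℝ} (hf : Continuous f) :
    Integrable f (radMeasure d n) := by
  rw [← Measure.restrict_eq_self_of_ae_mem (ae_radMeasure_mem_Icc d n)]
  exact hf.continuousOn.integrableOn_compact isCompact_Icc

theorem integral_radMeasure_succ {d n : ℕ} {f : (Fin (d + 1) → Fin n → ℝ) → ℝ}
    (hf : Continuous f) :
    ∫ g, f g ∂radMeasure (d + 1) n =
      ∫ g, ∫ x, f (Fin.cons x g) ∂(Measure.pi fun _ => rademacher) ∂radMeasure d n := by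
  have h_cons := (measurePreserving_piFinSuccAbove
    (fun _ : Fin (d + 1) => Measure.pi fun _ : Fin n => rademacher) 0).symm
  have h_int := (h_cons.integrable_comp_emb (MeasurableEquiv.measurableEmbedding _)).mpr
    (integrable_radMeasure hf)
  rw [radMeasure, ← h_cons.integral_comp (MeasurableEquiv.measurableEmbedding _)]
  refine (integral_prod_symm _ h_int).trans ?_
  simp only [Function.comp_apply, MeasurableEquiv.piFinSuccAbove_symm_apply,
    Fin.insertNthEquiv_zero]
  rfl

end Rademacher

section QuadraticForm

variable {d n : ℕ}

/-- The coefficients coupling the first coordinate to the others in the quadratic form of `M`. -/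
def crossCoeff (M : Matrix (Fin (d + 1)) (Fin (d + 1)) ℝ) (j : Fin d) : ℝ :=
  M 0 j.succ + M j.succ 0

/-- The matrix left after averaging out the first coordinate. With `R` the block of `M` avoiding the
first row and column and `p` its cross coefficients, a Rademacher average of `exp (x (p ⬝ᵥ s))` is
at most `exp ((p ⬝ᵥ s) ^ 2 / 2)`, so `R` is replaced by `R + p pᵀ / 2`. -/
noncomputable def averageFirst (M : Matrix (Fin (d + 1)) (Fin (d + 1)) ℝ) :
    Matrix (Fin d) (Fin d) ℝ :=
  M.submatrix Fin.succ Fin.succ + (1 / 2 : ℝ) • vecMulVec (crossCoeff M) (crossCoeff M)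

theorem trace_transpose_mul_mul_eq_sum (M : Matrix (Fin d) (Fin d) ℝ) (g : Fin d → Fin n → ℝ) :
    ((of g)ᵀ * M * of g).trace = ∑ c, ∑ i, ∑ j, M i j * g i c * g j c := by
  simp only [trace, diag_apply, mul_apply, transpose_apply, of_apply, Finset.sum_mul]
  refine Finset.sum_congr rfl fun c _ => ?_
  rw [Finset.sum_comm]
  refine Finset.sum_congr rfl fun i _ => Finset.sum_congr rfl fun j _ => by ring

theorem trace_transpose_mul_mul_cons (M : Matrix (Fin (d + 1)) (Fin (d + 1)) ℝ)
    (x : Fin n → ℝ) (g : Fin d → Fin n → ℝ) :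
    ((of (Fin.cons x g : Fin (d + 1) → Fin n → ℝ))ᵀ * M * of (Fin.cons x g)).trace =
      ∑ c, (M 0 0 * x c ^ 2 + (∑ j, crossCoeff M j * g j c) * x c) +
        ((of g)ᵀ * M.submatrix Fin.succ Fin.succ * of g).trace := by
  simp only [trace_transpose_mul_mul_eq_sum, ← Finset.sum_add_distrib]
  refine Finset.sum_congr rfl fun c _ => ?_
  simp only [Fin.sum_univ_succ, Fin.cons_zero, Fin.cons_succ, submatrix_apply, crossCoeff, add_mul,
    Finset.sum_add_distrib, Finset.sum_mul]
  simp only [mul_right_comm _ (x c)]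
  ring

theorem trace_transpose_mul_averageFirst_mul (M : Matrix (Fin (d + 1)) (Fin (d + 1)) ℝ)
    (g : Fin d → Fin n → ℝ) :
    ((of g)ᵀ * averageFirst M * of g).trace =
      ((of g)ᵀ * M.submatrix Fin.succ Fin.succ * of g).trace +
        ∑ c, (∑ j, crossCoeff M j * g j c) ^ 2 / 2 := by
  simp only [trace_transpose_mul_mul_eq_sum, ← Finset.sum_add_distrib, averageFirst,
    Matrix.add_apply, Matrix.smul_apply, submatrix_apply, vecMulVec_apply, smul_eq_mul, sq,
    Finset.sum_mul_sum, Finset.sum_div]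
  refine Finset.sum_congr rfl fun c _ => Finset.sum_congr rfl fun i _ =>
    Finset.sum_congr rfl fun j _ => by ring

theorem continuous_trace_transpose_mul_mul (M : Matrix (Fin d) (Fin d) ℝ) :
    Continuous fun g : Fin d → Fin n → ℝ => ((of g)ᵀ * M * of g).trace := by
  simp only [trace_transpose_mul_mul_eq_sum]
  fun_prop

theorem norm_sq_fin_succ (M : Matrix (Fin (d + 1)) (Fin (d + 1)) ℝ) :
    ‖M‖ ^ 2 = M 0 0 ^ 2 + ∑ j : Fin d, (M 0 j.succ ^ 2 + M j.succ 0 ^ 2) +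
      ‖M.submatrix Fin.succ Fin.succ‖ ^ 2 := by
  simp only [frobenius_norm_sq_eq_sum, norm_eq_abs, sq_abs, Fin.sum_univ_succ, submatrix_apply,
    Finset.sum_add_distrib]
  ring

theorem sum_crossCoeff_sq_le (M : Matrix (Fin (d + 1)) (Fin (d + 1)) ℝ) :
    ∑ j, crossCoeff M j ^ 2 / 2 + ‖M.submatrix Fin.succ Fin.succ‖ ^ 2 ≤ ‖M‖ ^ 2 - M 0 0 ^ 2 := by
  have h : ∑ j, crossCoeff M j ^ 2 / 2 ≤ ∑ j : Fin d, (M 0 j.succ ^ 2 + M j.succ 0 ^ 2) :=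
    Finset.sum_le_sum fun j _ => by
      rw [crossCoeff]; linarith [add_sq_le (a := M 0 j.succ) (b := M j.succ 0)]
  rw [norm_sq_fin_succ]
  linarith

theorem norm_averageFirst_le_add (M : Matrix (Fin (d + 1)) (Fin (d + 1)) ℝ) :
    ‖averageFirst M‖ ≤ ‖M.submatrix Fin.succ Fin.succ‖ + ∑ j, crossCoeff M j ^ 2 / 2 := by
  refine (norm_add_le _ _).trans_eq ?_
  rw [norm_smul, norm_of_nonneg one_half_pos.le, frobenius_norm_vecMulVec, ← sq,
    EuclideanSpace.norm_sq_eq, ← Finset.sum_div, one_div_mul_eq_div]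
  simp only [norm_eq_abs, sq_abs]

theorem sum_crossCoeff_sq_add_norm_averageFirst_sq_le
    {M : Matrix (Fin (d + 1)) (Fin (d + 1)) ℝ} (hM : ‖M‖ ≤ 1 / 4) :
    ∑ j, crossCoeff M j ^ 2 / 2 + 2 * ‖averageFirst M‖ ^ 2 ≤ 2 * ‖M‖ ^ 2 := by
  have h_norm := norm_averageFirst_le_add M
  have h_sum := sum_crossCoeff_sq_le M
  set r := ‖M.submatrix Fin.succ Fin.succ‖
  set s := ∑ j, crossCoeff M j ^ 2 / 2
  have hr : 0 ≤ r := norm_nonneg _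
  have hs : 0 ≤ s := by positivity
  have hrs : s + r ^ 2 ≤ ‖M‖ ^ 2 := h_sum.trans (sub_le_self _ (sq_nonneg _))
  have hM_sq : ‖M‖ ^ 2 ≤ (1 / 4) ^ 2 := by gcongr
  have hr_le : r ≤ 1 / 4 := by nlinarith
  have h_small : 4 * r + 2 * s ≤ 1 := by nlinarith
  calc s + 2 * ‖averageFirst M‖ ^ 2 ≤ s + 2 * (r + s) ^ 2 := by gcongr
    _ = s + 2 * r ^ 2 + (4 * r + 2 * s) * s := by ring
    _ ≤ s + 2 * r ^ 2 + 1 * s := by gcongr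
    _ = 2 * (s + r ^ 2) := by ring
    _ ≤ 2 * ‖M‖ ^ 2 := by gcongr

theorem norm_averageFirst_le {M : Matrix (Fin (d + 1)) (Fin (d + 1)) ℝ} (hM : ‖M‖ ≤ 1 / 4) :
    ‖averageFirst M‖ ≤ ‖M‖ := by
  have h_nonneg : 0 ≤ ∑ j, crossCoeff M j ^ 2 / 2 := by positivity
  refine (sq_le_sq₀ (norm_nonneg _) (norm_nonneg _)).mp ?_
  linarith [sum_crossCoeff_sq_add_norm_averageFirst_sq_le hM]

theorem add_trace_averageFirst (M : Matrix (Fin (d + 1)) (Fin (d + 1)) ℝ) :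
    M 0 0 + (averageFirst M).trace = M.trace + ∑ j, crossCoeff M j ^ 2 / 2 := by
  simp only [averageFirst, trace, diag_apply, Matrix.add_apply, Matrix.smul_apply,
    submatrix_apply, vecMulVec_apply, smul_eq_mul, Finset.sum_add_distrib, Fin.sum_univ_succ,
    add_assoc, ← sq, div_eq_inv_mul, mul_one]

theorem trace_averageFirst_add_norm_sq_le {M : Matrix (Fin (d + 1)) (Fin (d + 1)) ℝ}
    (hM : ‖M‖ ≤ 1 / 4) :
    M 0 0 + ((averageFirst M).trace + 2 * ‖averageFirst M‖ ^ 2) ≤ M.trace + 2 * ‖M‖ ^ 2 := by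
  linarith [add_trace_averageFirst M, sum_crossCoeff_sq_add_norm_averageFirst_sq_le hM]

theorem integral_exp_trace_cons_le (M : Matrix (Fin (d + 1)) (Fin (d + 1)) ℝ)
    (g : Fin d → Fin n → ℝ) :
    ∫ x, exp ((of (Fin.cons x g : Fin (d + 1) → Fin n → ℝ))ᵀ * M * of (Fin.cons x g)).trace
        ∂(Measure.pi fun _ => rademacher) ≤
      exp (n * M 0 0) * exp ((of g)ᵀ * averageFirst M * of g).trace := by
  simp only [trace_transpose_mul_mul_cons, exp_add _ (trace _)]
  rw [integral_mul_const]
  refine (mul_le_mul_of_nonneg_right (integral_exp_sum_quadratic_rademacher_le _ _)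
    (exp_pos _).le).trans_eq ?_
  rw [trace_transpose_mul_averageFirst_mul, ← exp_add, ← exp_add, Finset.sum_add_distrib,
    Finset.sum_const, Finset.card_univ, Fintype.card_fin, nsmul_eq_mul]
  ring_nf

theorem integral_exp_trace_le {M : Matrix (Fin d) (Fin d) ℝ} (hM : ‖M‖ ≤ 1 / 4) :
    ∫ g, exp ((of g)ᵀ * M * of g).trace ∂radMeasure d n ≤ exp (n * (M.trace + 2 * ‖M‖ ^ 2)) := by
  induction d with
  | zero =>
    rw [Subsingleton.elim M 0]
    simp
  | succ d ih =>
    have h_cont {m : ℕ} (N : Matrix (Fin m) (Fin m) ℝ) :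
        Continuous fun g : Fin m → Fin n → ℝ => exp ((of g)ᵀ * N * of g).trace :=
      continuous_exp.comp (continuous_trace_transpose_mul_mul N)
    calc ∫ g, exp ((of g)ᵀ * M * of g).trace ∂radMeasure (d + 1) n
        ≤ ∫ g, exp (n * M 0 0) * exp ((of g)ᵀ * averageFirst M * of g).trace
            ∂radMeasure d n := by
          rw [integral_radMeasure_succ (h_cont M)]
          exact integral_mono_of_nonneg
            (.of_forall fun g => integral_nonneg fun x => (exp_pos _).le)
            ((integrable_radMeasure (h_cont _)).const_mul _)
            (.of_forall fun g => integral_exp_trace_cons_le M g)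
      _ ≤ exp (n * M 0 0) *
            exp (n * ((averageFirst M).trace + 2 * ‖averageFirst M‖ ^ 2)) := by
          rw [integral_const_mul]
          gcongr
          exact ih ((norm_averageFirst_le hM).trans hM)
      _ ≤ exp (n * (M.trace + 2 * ‖M‖ ^ 2)) := by
          rw [← exp_add, ← mul_add]
          refine exp_le_exp.mpr (mul_le_mul_of_nonneg_left ?_ n.cast_nonneg)
          exact trace_averageFirst_add_norm_sq_le hM

end QuadraticForm

section Hutchinson

variable {d n : ℕ}

theorem continuous_hutch (M : Matrix (Fin d) (Fin d) ℝ) :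
    Continuous fun g : Fin d → Fin n → ℝ => hutch M g :=
  continuous_const.mul (continuous_trace_transpose_mul_mul M)

theorem hutch_smul (t : ℝ) (M : Matrix (Fin d) (Fin d) ℝ) (g : Fin d → Fin n → ℝ) :
    hutch (t • M) g = t * hutch M g := by
  simp only [hutch, Matrix.mul_smul, Matrix.smul_mul, trace_smul, smul_eq_mul, mul_left_comm]

theorem hutch_neg (M : Matrix (Fin d) (Fin d) ℝ) (g : Fin d → Fin n → ℝ) :
    hutch (-M) g = -hutch M g := by
  rw [← neg_one_smul ℝ M, hutch_smul, neg_one_mul]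

theorem natCast_mul_hutch (M : Matrix (Fin d) (Fin d) ℝ) (g : Fin d → Fin n → ℝ) :
    n * hutch M g = ((of g)ᵀ * M * of g).trace := by
  rcases eq_or_ne n 0 with rfl | hn
  · simp [trace]
  · rw [hutch]
    field_simp

theorem mgf_hutch_sub_trace_le {M : Matrix (Fin d) (Fin d) ℝ} {t : ℝ} (ht : ‖t • M‖ ≤ 1 / 4) :
    mgf (fun g => hutch M g - M.trace) (radMeasure d n) (n * t) ≤
      exp (n * (2 * ‖t • M‖ ^ 2)) := by
  have h_exp (g : Fin d → Fin n → ℝ) : exp (n * t * (hutch M g - M.trace)) =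
      exp ((of g)ᵀ * (t • M) * of g).trace * exp (-(n * (t • M).trace)) := by
    rw [← natCast_mul_hutch, hutch_smul, ← exp_add, trace_smul, smul_eq_mul]
    ring_nf
  simp only [mgf, h_exp]
  rw [integral_mul_const]
  calc (∫ g, exp ((of g)ᵀ * (t • M) * of g).trace ∂radMeasure d n) * exp (-(n * (t • M).trace))
      ≤ exp (n * ((t • M).trace + 2 * ‖t • M‖ ^ 2)) * exp (-(n * (t • M).trace)) := by
        gcongr
        exact integral_exp_trace_le ht
    _ = exp (n * (2 * ‖t • M‖ ^ 2)) := by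
        rw [← exp_add]
        ring_nf

theorem measureReal_le_hutch_sub_trace_le {M : Matrix (Fin d) (Fin d) ℝ} {t : ℝ} (ht : 0 ≤ t)
    (htM : ‖t • M‖ ≤ 1 / 4) (s : ℝ) :
    (radMeasure d n).real {g | s ≤ hutch M g - M.trace} ≤
      exp (n * (2 * ‖t • M‖ ^ 2 - t * s)) := by
  have h_int : Integrable (fun g => exp (n * t * (hutch M g - M.trace))) (radMeasure d n) :=
    integrable_radMeasure (continuous_exp.comp
      (continuous_const.mul ((continuous_hutch M).sub continuous_const)))
  calc (radMeasure d n).real {g | s ≤ hutch M g - M.trace}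
      ≤ exp (-(n * t) * s) * mgf (fun g => hutch M g - M.trace) (radMeasure d n) (n * t) :=
        measure_ge_le_exp_mul_mgf s (by positivity) h_int
    _ ≤ exp (-(n * t) * s) * exp (n * (2 * ‖t • M‖ ^ 2)) := by
        gcongr
        exact mgf_hutch_sub_trace_le htM
    _ = exp (n * (2 * ‖t • M‖ ^ 2 - t * s)) := by
        rw [← exp_add]
        ring_nf

theorem measureReal_lt_abs_hutch_sub_trace_le {M : Matrix (Fin d) (Fin d) ℝ} {t : ℝ} (ht : 0 ≤ t)
    (htM : ‖t • M‖ ≤ 1 / 4) (s : ℝ) :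
    (radMeasure d n).real {g | s < |hutch M g - M.trace|} ≤
      2 * exp (n * (2 * ‖t • M‖ ^ 2 - t * s)) := by
  have h_neg : ‖t • -M‖ = ‖t • M‖ := by rw [smul_neg, norm_neg]
  have h_union : {g : Fin d → Fin n → ℝ | s < |hutch M g - M.trace|} ⊆
      {g | s ≤ hutch M g - M.trace} ∪ {g | s ≤ hutch (-M) g - (-M).trace} := by
    intro g hg
    simp only [Set.mem_union, Set.mem_ofPred_eq, hutch_neg, trace_neg] at hg ⊢
    exact (lt_abs.mp hg).imp le_of_lt fun h => by linarith
  calc (radMeasure d n).real {g | s < |hutch M g - M.trace|}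
      ≤ _ := measureReal_mono h_union
    _ ≤ _ := measureReal_union_le _ _
    _ ≤ exp (n * (2 * ‖t • M‖ ^ 2 - t * s)) + exp (n * (2 * ‖t • -M‖ ^ 2 - t * s)) :=
        add_le_add (measureReal_le_hutch_sub_trace_le ht htM s)
          (measureReal_le_hutch_sub_trace_le ht (h_neg.trans_le htM) s)
    _ = 2 * exp (n * (2 * ‖t • M‖ ^ 2 - t * s)) := by rw [h_neg, ← two_mul]

theorem le_radMeasure_abs_hutch_sub_trace_le (M : Matrix (Fin d) (Fin d) ℝ) {δ : ℝ} (hδ : 0 < δ)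
    (hδ_half : δ ≤ 1 / 2) (hn : 16 * log (1 / δ) ≤ n) :
    ENNReal.ofReal (1 - δ) ≤
      radMeasure d n {g | |hutch M g - M.trace| ≤ 4 * √(log (1 / δ) / n) * ‖M‖} := by
  set L := log (1 / δ) with hL
  set s := 4 * √(L / n) * ‖M‖ with hs
  have h_meas : MeasurableSet {g : Fin d → Fin n → ℝ | |hutch M g - M.trace| ≤ s} :=
    measurableSet_le ((continuous_hutch M).sub continuous_const).abs.measurable measurable_const
  suffices h : (radMeasure d n).real {g | s < |hutch M g - M.trace|} ≤ δ by
    rw [← ofReal_measureReal]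
    refine ENNReal.ofReal_le_ofReal ?_
    have h_compl := probReal_compl_eq_one_sub (μ := radMeasure d n) h_meas
    simp only [Set.compl_ofPred, not_le] at h_compl
    linarith
  rcases eq_or_ne M 0 with rfl | hM
  · simpa [hs, hutch] using hδ.le
  have hL_pos : 0 < L := log_pos (by rw [lt_div_iff₀ hδ]; linarith)
  have hn_pos : (0 : ℝ) < n := by linarith
  have hM_pos : 0 < ‖M‖ := norm_pos_iff.mpr hM
  set t := √(L / n) / ‖M‖ with ht
  have h_sq : √(L / n) ^ 2 = L / n := sq_sqrt (by positivity)
  have htM : ‖t • M‖ = √(L / n) := by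
    rw [norm_smul, norm_of_nonneg (by positivity), ht, div_mul_cancel₀ _ hM_pos.ne']
  have htM_le : ‖t • M‖ ≤ 1 / 4 := by
    rw [htM, sqrt_le_left (by norm_num), div_le_iff₀ hn_pos]
    linarith
  have h_exponent : n * (2 * ‖t • M‖ ^ 2 - t * s) = -L + -L := by
    have h_ts : t * s = 4 * √(L / n) ^ 2 := by rw [ht, hs]; field_simp
    rw [htM, h_ts, h_sq]
    field_simp
    norm_num
  have h_exp : exp (-L) = δ := by rw [hL, one_div, log_inv, neg_neg, exp_log hδ]
  calc (radMeasure d n).real {g | s < |hutch M g - M.trace|}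
      ≤ 2 * exp (n * (2 * ‖t • M‖ ^ 2 - t * s)) :=
        measureReal_lt_abs_hutch_sub_trace_le (by positivity) htM_le s
    _ = 2 * δ * δ := by rw [h_exponent, exp_add, h_exp, mul_assoc]
    _ ≤ δ := by nlinarith

end Hutchinson

theorem stmt6 : ∃ c C : ℝ, 0 < c ∧ 0 < C ∧
    ∀ (d : ℕ) (A At Δ : Matrix (Fin d) (Fin d) ℝ) (δ : ℝ) (k ℓ : ℕ),
      A.PosSemidef → 0 < δ → δ ≤ 1 / 2 → 1 ≤ k → c * Real.log (1 / δ) ≤ (ℓ : ℝ) →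
      A.trace = At.trace + Δ.trace →
      (∀ B : Matrix (Fin d) (Fin d) ℝ, B.rank ≤ k → frobNorm Δ ≤ 2 * frobNorm (A - B)) →
      ENNReal.ofReal (1 - δ) ≤
        radMeasure d ℓ
          {g | |At.trace + hutch Δ g - A.trace| ≤
            2 * C * Real.sqrt (Real.log (1 / δ) / ((k : ℝ) * ℓ)) * A.trace} := by
  refine ⟨16, 4, by norm_num, by norm_num, ?_⟩
  intro d A At Δ δ k ℓ hA hδ hδ_half hk hℓ h_trace hΔ
  obtain ⟨B, hB_rank, hB_err⟩ := exists_rank_le_norm_sub_le hA hk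
  have hΔ_norm : ‖Δ‖ ≤ 2 * (A.trace / √k) := by
    have h := hΔ B hB_rank
    rw [frobNorm_eq_norm, frobNorm_eq_norm] at h
    exact h.trans (mul_le_mul_of_nonneg_left hB_err zero_le_two)
  refine (le_radMeasure_abs_hutch_sub_trace_le Δ hδ hδ_half hℓ).trans (measure_mono fun g hg => ?_)
  calc |At.trace + hutch Δ g - A.trace| = |hutch Δ g - Δ.trace| := by rw [h_trace]; ring_nf
    _ ≤ 4 * √(log (1 / δ) / ℓ) * ‖Δ‖ := hg
    _ ≤ 4 * √(log (1 / δ) / ℓ) * (2 * (A.trace / √k)) := by gcongr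
    _ = 2 * 4 * √(log (1 / δ) / (k * ℓ)) * A.trace := by
        rw [mul_comm (k : ℝ), ← div_div, sqrt_div' _ k.cast_nonneg]
        ring
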